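/- The first player has a winning strategy in the achievement game Sim_a on K_6 with target K_3: when two players, Red and Green, alternately color one so-far uncolored edge of the complete graph K_6 in their own color with Red moving first, and the first player to complete a triangle all three of whose edges have his own color wins, Red can force a win. -/

import Mathlib

/-- The 15 edges of the complete graph `K_6`: unordered pairs of distinct vertices. -/
abbrev Edge6 := {e : Sym2 (Fin 6) // ¬ e.IsDiag}

/-- The edge of `K_6` joining two distinct vertices. -/
def mkEdge6 (a b : Fin 6) (h : a ≠ b) : Edge6 :=
  ⟨s(a, b), by simpa using h⟩

/-- A position of the achievement game Sim_a: each edge of `K_6` is uncolored (`none`),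
colored by Red (`some true`) or colored by Green (`some false`). -/
abbrev Pos := Edge6 → Option Bool

/-- The initial position: all edges uncolored. -/
def startPos : Pos := fun _ => none

/-- Player `c` colors edge `e`. -/
def colorEdge (p : Pos) (c : Bool) (e : Edge6) : Pos :=
  Function.update p e (some c)

/-- The player making the `k`-th move (moves are numbered from 0):
Red (`true`) moves first and the players alternate. -/
def playerAt (k : ℕ) : Bool := decide (k % 2 = 0)

/-- The position reached from `p` after the list of moves `ms`, the first element of
`ms` being made by the player moving at step `k`. -/
def posFrom (p : Pos) (k : ℕ) : List Edge6 → Pos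
  | [] => p
  | e :: ms => posFrom (colorEdge p (playerAt k) e) (k + 1) ms

/-- The position reached from the empty board after the list of moves `ms`. -/
def posAfter (ms : List Edge6) : Pos := posFrom startPos 0 ms

/-- In position `p`, player `c` has completed a monochromatic triangle in his own color:
three vertices all three of whose connecting edges have color `c`. -/
def OwnsTriangle (p : Pos) (c : Bool) : Prop :=
  ∃ a b d : Fin 6, ∃ hab : a ≠ b, ∃ had : a ≠ d, ∃ hbd : b ≠ d,
    p (mkEdge6 a b hab) = some c ∧ p (mkEdge6 a d had) = some c ∧
      p (mkEdge6 b d hbd) = some c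

/-- A play (list of moves, alternately by Red and Green, Red first) in which Red follows
the strategy `σ`: every move colors a so-far uncolored edge, and every move of Red is
the one prescribed by `σ` at the current position. -/
def FollowsRed (σ : Pos → Edge6) (ms : List Edge6) : Prop :=
  ∀ i, ∀ h : i < ms.length,
    (posAfter (ms.take i)) (ms.get ⟨i, h⟩) = none ∧
    (playerAt i = true → ms.get ⟨i, h⟩ = σ (posAfter (ms.take i)))

/-- Code of an edge: `6 * min + max`. -/
def ecode (e : Edge6) : ℕ :=
  Sym2.lift ⟨fun a b : Fin 6 => 6 * min a.val b.val + max a.val b.val,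
    fun a b => by simp only [min_comm, max_comm]⟩ e.1

theorem ecode_mk (a b : Fin 6) (h : a ≠ b) :
    ecode (mkEdge6 a b h) = 6 * min a.val b.val + max a.val b.val := rfl

theorem edge_cases (e : Edge6) : ∃ a b : Fin 6, ∃ h : a ≠ b, e = mkEdge6 a b h := by
  obtain ⟨e, he⟩ := e
  induction e using Sym2.ind with
  | _ a b => exact ⟨a, b, by simpa using he, rfl⟩

theorem ecode_inj {e f : Edge6} (h : ecode e = ecode f) : e = f := by
  obtain ⟨a, b, hab, rfl⟩ := edge_cases e
  obtain ⟨c, d, hcd, rfl⟩ := edge_cases f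
  rw [ecode_mk, ecode_mk] at h
  apply Subtype.ext
  show s(a, b) = s(c, d)
  rw [Sym2.eq_iff]
  simp only [Fin.ext_iff]
  omega

def codes : List ℕ := [1, 2, 3, 4, 5, 8, 9, 10, 11, 15, 16, 17, 22, 23, 29]

theorem ecode_mem (e : Edge6) : ecode e ∈ codes := by
  obtain ⟨a, b, hab, rfl⟩ := edge_cases e
  rw [ecode_mk]
  revert a b
  decide

theorem codes_surj : ∀ n ∈ codes, ∃ e, ecode e = n := by
  have h : ∀ n ∈ codes, ∃ a b : Fin 6, a ≠ b ∧ 6 * min a.val b.val + max a.val b.val = n := by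
    decide
  intro n hn
  obtain ⟨a, b, hab, h⟩ := h n hn
  exact ⟨mkEdge6 a b hab, h⟩

/-- Position with given red and green lists of codes. -/
def toPos (r g : List ℕ) : Pos := fun e =>
  if r.contains (ecode e) then some true
  else if g.contains (ecode e) then some false else none

/-- the triangle test on lists -/
def own (m : List ℕ) : Bool :=
  (List.range 6).any fun a => (List.range 6).any fun b => (List.range 6).any fun d =>
    decide (a < b) && decide (b < d) && m.contains (6 * a + b) && m.contains (6 * a + d)
      && m.contains (6 * b + d)

theorem own_of {m : List ℕ} {x y z : ℕ} (hxy : x < y) (hyz : y < z) (hz : z < 6)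
    (h1 : 6 * x + y ∈ m) (h2 : 6 * x + z ∈ m) (h3 : 6 * y + z ∈ m) : own m = true := by
  simp only [own, List.any_eq_true, List.mem_range, Bool.and_eq_true, decide_eq_true_eq,
    List.contains_iff_mem]
  exact ⟨x, by omega, y, by omega, z, hz, ⟨⟨⟨hxy, hyz⟩, h1⟩, h2⟩, h3⟩

theorem own_false {r g : List ℕ} (h : own g = false) : ¬ OwnsTriangle (toPos r g) false := by
  rintro ⟨a, b, d, hab, had, hbd, h1, h2, h3⟩
  have key : ∀ e, toPos r g e = some false → ecode e ∈ g := by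
    intro e he
    unfold toPos at he
    split_ifs at he with q1 q2
    · simp at he
    · simpa using q2
  have k1 := key _ h1
  have k2 := key _ h2
  have k3 := key _ h3
  rw [ecode_mk] at k1 k2 k3
  have e1 : a.val ≠ b.val := fun h => hab (Fin.ext h)
  have e2 : a.val ≠ d.val := fun h => had (Fin.ext h)
  have e3 : b.val ≠ d.val := fun h => hbd (Fin.ext h)
  have ha := a.isLt
  have hb := b.isLt
  have hd := d.isLt
  have contra : own g = true := by
    rcases lt_or_gt_of_ne e1 with h1 | h1 <;> rcases lt_or_gt_of_ne e2 with h2 | h2 <;>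
      rcases lt_or_gt_of_ne e3 with h3 | h3 <;>
      simp only [min_eq_left h1.le, max_eq_right h1.le, min_eq_right h1.le, max_eq_left h1.le,
        min_eq_left h2.le, max_eq_right h2.le, min_eq_right h2.le, max_eq_left h2.le,
        min_eq_left h3.le, max_eq_right h3.le, min_eq_right h3.le, max_eq_left h3.le]
        at k1 k2 k3 <;>
      first
      | (exfalso; omega)
      | exact own_of (x := a.val) (y := b.val) (z := d.val) (by omega) (by omega) (by omega) (by assumption) (by assumption) (by assumption)
      | exact own_of (x := a.val) (y := d.val) (z := b.val) (by omega) (by omega) (by omega) (by assumption) (by assumption) (by assumption)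
      | exact own_of (x := b.val) (y := a.val) (z := d.val) (by omega) (by omega) (by omega) (by assumption) (by assumption) (by assumption)
      | exact own_of (x := b.val) (y := d.val) (z := a.val) (by omega) (by omega) (by omega) (by assumption) (by assumption) (by assumption)
      | exact own_of (x := d.val) (y := a.val) (z := b.val) (by omega) (by omega) (by omega) (by assumption) (by assumption) (by assumption)
      | exact own_of (x := d.val) (y := b.val) (z := a.val) (by omega) (by omega) (by omega) (by assumption) (by assumption) (by assumption)
  rw [h] at contra
  exact Bool.noConfusion contra

theorem own_true {r g : List ℕ} (h : own r = true) : OwnsTriangle (toPos r g) true := by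
  simp only [own, List.any_eq_true, List.mem_range, Bool.and_eq_true, decide_eq_true_eq,
    List.contains_iff_mem] at h
  obtain ⟨a, ha, b, hb, d, hd, ⟨⟨⟨hab, hbd⟩, h1⟩, h2⟩, h3⟩ := h
  have key : ∀ x y : Fin 6, ∀ hn : x ≠ y, x.val < y.val → 6 * x.val + y.val ∈ r →
      toPos r g (mkEdge6 x y hn) = some true := by
    intro x y hn hlt hm
    unfold toPos
    rw [ecode_mk, min_eq_left hlt.le, max_eq_right hlt.le, if_pos]
    simpa using hm
  have n1 : (⟨a, ha⟩ : Fin 6) ≠ ⟨b, hb⟩ := by simp; omega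
  have n2 : (⟨a, ha⟩ : Fin 6) ≠ ⟨d, hd⟩ := by simp; omega
  have n3 : (⟨b, hb⟩ : Fin 6) ≠ ⟨d, hd⟩ := by simp; omega
  exact ⟨⟨a, ha⟩, ⟨b, hb⟩, ⟨d, hd⟩, n1, n2, n3, key _ _ _ hab h1,
    key _ _ _ (hab.trans hbd) h2, key _ _ _ hbd h3⟩

def free (r g : List ℕ) (n : ℕ) : Bool := !(r.contains n) && !(g.contains n)

theorem toPos_none {r g : List ℕ} {e : Edge6} :
    toPos r g e = none ↔ free r g (ecode e) = true := by
  unfold toPos free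
  cases r.contains (ecode e) <;> cases g.contains (ecode e) <;> simp

theorem color_red {r g : List ℕ} {e : Edge6} :
    colorEdge (toPos r g) true e = toPos (ecode e :: r) g := by
  funext f
  by_cases h : f = e
  · subst h
    simp [colorEdge, toPos]
  · have h' : ecode f ≠ ecode e := fun hh => h (ecode_inj hh)
    simp [colorEdge, toPos, h, h']

theorem color_green {r g : List ℕ} {e : Edge6} (he : free r g (ecode e) = true) :
    colorEdge (toPos r g) false e = toPos r (ecode e :: g) := by
  funext f
  by_cases h : f = e
  · subst h
    simp [free] at he
    simp [colorEdge, toPos, he.1]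
  · have h' : ecode f ≠ ecode e := fun hh => h (ecode_inj hh)
    simp [colorEdge, toPos, h, h']

def Won (p : Pos) : Prop := OwnsTriangle p true ∧ ¬ OwnsTriangle p false

/-- Red to move can force a win. -/
inductive RedWin : Pos → Prop
  | now (p : Pos) (e : Edge6) : p e = none → Won (colorEdge p true e) → RedWin p
  | step (p : Pos) (e : Edge6) : p e = none →
      (∃ f, colorEdge p true e f = none) →
      (∀ f, colorEdge p true e f = none → RedWin (colorEdge (colorEdge p true e) false f)) →
      RedWin p

/-- Green to move, Red can force a win. -/
def GreenLost (q : Pos) : Prop :=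
  (∃ f, q f = none) ∧ ∀ f, q f = none → RedWin (colorEdge q false f)

def Good (p : Pos) (e : Edge6) : Prop :=
  p e = none ∧ (Won (colorEdge p true e) ∨ GreenLost (colorEdge p true e))

theorem RedWin.good {p : Pos} (h : RedWin p) : ∃ e, Good p e := by
  rcases h with ⟨_, e, h1, h2⟩ | ⟨_, e, h1, h2, h3⟩
  · exact ⟨e, h1, Or.inl h2⟩
  · exact ⟨e, h1, Or.inr ⟨h2, h3⟩⟩

/-- Check of a line of forcing moves for Red. -/
def line (r g : List ℕ) : List ℕ → Bool
  | [] => codes.any fun n => free r g n && own (n :: r) && !own g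
  | m :: ms => (codes.any fun n => free r g n && own (n :: r) && !own g) ||
      (codes.contains m && free r g m && (codes.any fun n => free (m :: r) g n) &&
        codes.all fun n => !free (m :: r) g n || line (m :: r) (n :: g) ms)

theorem now_sound {r g : List ℕ}
    (h : (codes.any fun n => free r g n && own (n :: r) && !own g) = true) :
    RedWin (toPos r g) := by
  simp only [List.any_eq_true, Bool.and_eq_true, Bool.not_eq_true'] at h
  obtain ⟨n, hn, ⟨h1, h2⟩, h3⟩ := h
  obtain ⟨e, rfl⟩ := codes_surj n hn
  refine RedWin.now _ e (toPos_none.2 h1) ?_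
  rw [color_red]
  exact ⟨own_true h2, own_false h3⟩

theorem line_sound (ms : List ℕ) : ∀ r g, line r g ms = true → RedWin (toPos r g) := by
  induction ms with
  | nil => exact fun r g h => now_sound h
  | cons m ms ih =>
    intro r g h
    rw [line, Bool.or_eq_true] at h
    rcases h with h | h
    · exact now_sound h
    · simp only [Bool.and_eq_true, List.contains_iff_mem, List.any_eq_true, List.all_eq_true,
        Bool.or_eq_true, Bool.not_eq_true'] at h
      obtain ⟨⟨⟨hm, hf⟩, n, hn, hn'⟩, hall⟩ := h
      obtain ⟨e, rfl⟩ := codes_surj m hm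
      obtain ⟨f, rfl⟩ := codes_surj n hn
      refine RedWin.step _ e (toPos_none.2 hf) ⟨f, ?_⟩ ?_
      · rw [color_red]; exact toPos_none.2 hn'
      · intro f' hf'
        rw [color_red] at hf' ⊢
        have hf2 := toPos_none.1 hf'
        rw [color_green hf2]
        rcases hall _ (ecode_mem f') with h | h
        · rw [hf2] at h; exact Bool.noConfusion h
        · exact ih _ _ h

/-- Red's two further forcing moves, depending on Green's first reply. -/
def plan : ℕ → List ℕ
  | 2 => [3, 4]
  | 3 => [2, 4]
  | 4 => [2, 3]
  | 5 => [2, 3]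
  | 8 => [9, 10]
  | 9 => [8, 10]
  | 10 => [8, 9]
  | 11 => [8, 9]
  | 15 => [4, 2]
  | 16 => [3, 2]
  | 17 => [3, 2]
  | 22 => [2, 3]
  | 23 => [2, 3]
  | 29 => [2, 3]
  | _ => []

theorem plan_ok : ∀ n ∈ codes, free [1] [] n = true → line [1] [n] (plan n) = true := by
  decide +kernel

theorem start_win : RedWin startPos := by
  have h0 : startPos = toPos [] [] := by
    funext e; simp [startPos, toPos]
  rw [h0]
  obtain ⟨e, he⟩ := codes_surj 1 (by decide)
  obtain ⟨f, hf⟩ := codes_surj 2 (by decide)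
  refine RedWin.step _ e (toPos_none.2 rfl) ⟨f, ?_⟩ ?_
  · rw [color_red, toPos_none, he, hf]; rfl
  · intro f' hf'
    rw [color_red] at hf' ⊢
    have hf2 := toPos_none.1 hf'
    rw [color_green hf2]
    rw [he] at hf2 ⊢
    exact line_sound _ _ _ (plan_ok _ (ecode_mem f') hf2)

theorem exists_strategy : ∃ σ : Pos → Edge6, ∀ p,
    ((∃ e, Good p e) → Good p (σ p)) ∧ ((∃ e, p e = none) → p (σ p) = none) := by
  have h : ∀ p : Pos, ∃ x : Edge6,
      ((∃ e, Good p e) → Good p x) ∧ ((∃ e, p e = none) → p x = none) := by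
    intro p
    by_cases h1 : ∃ e, Good p e
    · obtain ⟨e, he⟩ := h1
      exact ⟨e, fun _ => he, fun _ => he.1⟩
    · by_cases h2 : ∃ e, p e = none
      · obtain ⟨e, he⟩ := h2
        exact ⟨e, fun h => absurd h h1, fun _ => he⟩
      · exact ⟨mkEdge6 0 1 (by decide), fun h => absurd h h1, fun h => absurd h h2⟩
  choose σ hσ using h
  exact ⟨σ, hσ⟩

theorem posFrom_append (ms : List Edge6) : ∀ (p : Pos) (k : ℕ) (e : Edge6),
    posFrom p k (ms ++ [e]) = colorEdge (posFrom p k ms) (playerAt (k + ms.length)) e := by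
  induction ms with
  | nil => intro p k e; rfl
  | cons m ms ih =>
    intro p k e
    simp only [List.cons_append, posFrom, ih, List.length_cons]
    congr 2
    omega

theorem posAfter_append (ms : List Edge6) (e : Edge6) :
    posAfter (ms ++ [e]) = colorEdge (posAfter ms) (playerAt ms.length) e := by
  simp [posAfter, posFrom_append]

theorem playerAt_succ (n : ℕ) : playerAt (n + 1) = !playerAt n := by
  unfold playerAt
  rcases Nat.mod_two_eq_zero_or_one n with h | h
  · have : (n + 1) % 2 = 1 := by omega
    simp [h, this]
  · have : (n + 1) % 2 = 0 := by omega
    simp [h, this]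

theorem invariant (σ : Pos → Edge6) (hσ : ∀ p, (∃ e, Good p e) → Good p (σ p))
    (ms : List Edge6) : FollowsRed σ ms →
    (∃ j ≤ ms.length, Won (posAfter (ms.take j))) ∨
    (playerAt ms.length = true ∧ RedWin (posAfter ms)) ∨
    (playerAt ms.length = false ∧ GreenLost (posAfter ms)) := by
  induction ms using List.reverseRecOn with
  | nil => exact fun _ => Or.inr (Or.inl ⟨rfl, start_win⟩)
  | append_singleton ms e ih =>
    intro hF
    have hF' : FollowsRed σ ms := by
      intro i hi
      have h := hF i (by simp; omega)
      rw [List.take_append_of_le_length hi.le] at h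
      simpa [List.getElem_append_left hi] using h
    have hl := hF ms.length (by simp)
    simp only [List.take_left, List.get_eq_getElem, List.getElem_concat_length] at hl
    obtain ⟨hfree, hmove⟩ := hl
    rcases ih hF' with ⟨j, hj, hw⟩ | ⟨hp, hw⟩ | ⟨hp, hw⟩
    · refine Or.inl ⟨j, by simp; omega, ?_⟩
      rwa [List.take_append_of_le_length hj]
    · have hg := hσ _ hw.good
      rw [← hmove hp] at hg
      have hpos : posAfter (ms ++ [e]) = colorEdge (posAfter ms) true e := by
        rw [posAfter_append, hp]
      rcases hg.2 with h | h
      · refine Or.inl ⟨(ms ++ [e]).length, le_rfl, ?_⟩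
        rw [List.take_length, hpos]
        exact h
      · refine Or.inr (Or.inr ⟨?_, ?_⟩)
        · rw [List.length_append, List.length_singleton, playerAt_succ, hp]; rfl
        · rw [hpos]; exact h
    · refine Or.inr (Or.inl ⟨?_, ?_⟩)
      · rw [List.length_append, List.length_singleton, playerAt_succ, hp]; rfl
      · rw [posAfter_append, hp]; exact hw.2 e hfree

/-- The first player, Red, has a winning strategy in the achievement game Sim_a on
`K_6` with target `K_3`: a strategy `σ` such that (a) in every play in which Red follows
`σ`, whenever it is Red's turn and some edge is uncolored, `σ` prescribes an uncolored
edge, and (b) every play following `σ` in which all edges have been colored passes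
through a position where Red has completed a monochromatic triangle in his color while
Green has not yet completed one in his — i.e. Red completes a monochromatic triangle
strictly before Green does, so Red can force a win. -/
theorem red_wins_sim_achievement :
    ∃ σ : Pos → Edge6,
      (∀ ms : List Edge6, FollowsRed σ ms → playerAt ms.length = true →
        (∃ e, posAfter ms e = none) → posAfter ms (σ (posAfter ms)) = none) ∧
      (∀ ms : List Edge6, FollowsRed σ ms → (∀ e, posAfter ms e ≠ none) →
        ∃ j ≤ ms.length,
          OwnsTriangle (posAfter (ms.take j)) true ∧
          ¬ OwnsTriangle (posAfter (ms.take j)) false) := by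
  obtain ⟨σ, hσ⟩ := exists_strategy
  refine ⟨σ, fun ms _ _ he => (hσ _).2 he, fun ms hF hfull => ?_⟩
  rcases invariant σ (fun p => (hσ p).1) ms hF with h | ⟨_, h⟩ | ⟨_, h⟩
  · exact h
  · obtain ⟨e, he⟩ := h.good
    exact absurd he.1 (hfull e)
  · obtain ⟨e, he⟩ := h.1
    exact absurd he (hfull e)
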